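/- arXiv:1909.08345 — 2 statements merged into one kernel-verified Lean document; each statement's English description precedes it below -/
import Mathlib

section
/- Let E and A be n×n real matrices. The pair (E, A) is regular, impulse-free and asymptotically stable if and only if there exists an n×n real matrix R such that EᵀR = RᵀE, the symmetric matrix EᵀR is positive semidefinite, and AᵀR + RᵀA is negative definite. -/
open Polynomial Matrix

/-- The pencil polynomial `p(X) = det(X·E − A)` of the pair `(E, A)`. -/
noncomputable def pencil {n : Type*} [Fintype n] [DecidableEq n]
    (E A : Matrix n n ℝ) : Polynomial ℝ :=
  (Matrix.of fun i j => Polynomial.X * Polynomial.C (E i j) - Polynomial.C (A i j)).det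

/-- The pair `(E, A)` is regular: the pencil polynomial is not identically zero. -/
def RegularPair {n : Type*} [Fintype n] [DecidableEq n] (E A : Matrix n n ℝ) : Prop :=
  pencil E A ≠ 0

/-- The pair `(E, A)` is impulse-free: the pencil polynomial is nonzero and its degree
equals `rank E`. -/
def ImpulseFreePair {n : Type*} [Fintype n] [DecidableEq n] (E A : Matrix n n ℝ) : Prop :=
  pencil E A ≠ 0 ∧ (pencil E A).natDegree = E.rank

/-- The pair `(E, A)` is asymptotically stable: every complex `λ` with
`det(λ·E − A) = 0` has negative real part. -/
def AsympStablePair {n : Type*} [Fintype n] [DecidableEq n] (E A : Matrix n n ℝ) : Prop :=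
  ∀ lam : ℂ, (lam • E.map (Complex.ofReal) - A.map (Complex.ofReal)).det = 0 → lam.re < 0

/-!
If `R` is a certificate and `A v = E u` with `v ≠ 0`, then `Re ⟨u, EᴴR v⟩ < 0`. Taking `u = λ v` for
a generalized eigenvector `v` puts the eigenvalues in the open left half plane; taking `v ∈ ker E`
shows that no such `v` exists, which excludes impulses.

Both admissibility and the existence of a certificate are invariant under strict equivalence of
pencils, so `E = diag(1, 0)`. Each of them forces the block of `A` on `ker E` to be invertible: up
to sign its determinant is the coefficient of `X ^ rank E` in the pencil polynomial. Eliminating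
that block gives `A = diag(S, 1)`, with pencil polynomial `± S.charpoly` and certificate
`diag(P, -1)` whenever `P ≻ 0` solves the Lyapunov inequality `SᴴP + PS ≺ 0`.

A stable `S` has a complex such `P`, whose entrywise real part then works as well. The Cayley
transform `b = (1 + S)(1 - S)⁻¹` has spectrum in the open unit disc, so `‖b ^ k‖ < 1` for some
`k > 0`, and `P = ∑ j < k, (b ^ j)ᴴ b ^ j` telescopes to `P - bᴴ P b = 1 - (b ^ k)ᴴ b ^ k ≻ 0`,
which is the Lyapunov inequality for `S` up to congruence.
-/

section CStarAlgebraLyapunov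

theorem exists_norm_pow_succ_lt_one_of_spectrum {A : Type*} [NormedRing A] [NormedAlgebra ℂ A]
    [CompleteSpace A] {a : A} (ha : ∀ z ∈ spectrum ℂ a, ‖z‖ < 1) : ∃ k : ℕ, ‖a ^ (k + 1)‖ < 1 := by
  cases subsingleton_or_nontrivial A
  · exact ⟨0, by simp [Subsingleton.elim a 0]⟩
  have radius_lt : spectralRadius ℂ a < (1 : NNReal) :=
    spectrum.spectralRadius_lt_of_forall_lt a fun z hz => mod_cast ha z hz
  obtain ⟨k, root_lt, hk⟩ :=
    (((spectrum.pow_nnnorm_pow_one_div_tendsto_nhds_spectralRadius a).eventually_lt_const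
      radius_lt).and (Filter.eventually_gt_atTop 0)).exists
  obtain ⟨k, rfl⟩ := Nat.exists_eq_add_of_lt hk
  refine ⟨k, ?_⟩
  contrapose! root_lt
  have one_le : (1 : ENNReal) ≤ (‖a ^ (0 + k + 1)‖₊ : ENNReal) := by simpa using mod_cast root_lt
  simpa using ENNReal.one_le_rpow one_le (by positivity)

theorem re_cayley_nonneg {μ : ℂ} (hμ : 1 ≤ ‖μ‖) : 0 ≤ ((μ - 1) / (μ + 1)).re := by
  have one_le_normSq : 1 ≤ μ.re * μ.re + μ.im * μ.im := by
    rw [← Complex.normSq_apply, Complex.normSq_eq_norm_sq]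
    exact one_le_pow₀ hμ
  rw [Complex.div_re, ← add_div]
  refine div_nonneg ?_ (Complex.normSq_nonneg _)
  simp only [Complex.sub_re, Complex.sub_im, Complex.add_re, Complex.add_im, Complex.one_re,
    Complex.one_im]
  linarith

theorem norm_lt_one_of_mem_spectrum_cayley {A : Type*} [Ring A] [Algebra ℂ A] {a b : A}
    (ha : ∀ z ∈ spectrum ℂ a, z.re < 0) (h_unit : IsUnit (1 - a)) (hb : b * (1 - a) = 1 + a)
    {μ : ℂ} (hμ : μ ∈ spectrum ℂ b) : ‖μ‖ < 1 := by
  contrapose! hμ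
  rw [spectrum.notMem_iff, ← IsUnit.mul_right_iff h_unit, sub_mul, hb]
  by_cases h_pole : μ + 1 = 0
  · have : algebraMap ℂ A μ * (1 - a) - (1 + a) = algebraMap ℂ A (-(1 + 1)) := by
      rw [eq_neg_of_add_eq_zero_left h_pole, map_neg, map_neg, map_add, map_one]
      noncomm_ring
    rw [this]
    exact (isUnit_iff_ne_zero.2 (by norm_num)).map _
  · have : algebraMap ℂ A μ * (1 - a) - (1 + a) =
        algebraMap ℂ A (μ + 1) * (algebraMap ℂ A ((μ - 1) / (μ + 1)) - a) := by
      rw [mul_sub (algebraMap ℂ A (μ + 1)), ← map_mul, mul_div_cancel₀ _ h_pole, map_add, map_sub,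
        map_one]
      noncomm_ring
    rw [this]
    refine ((isUnit_iff_ne_zero.2 h_pole).map _).mul (spectrum.notMem_iff.1 fun h_mem => ?_)
    exact (ha _ h_mem).not_ge (re_cayley_nonneg hμ)

variable {A : Type*}

theorem sum_sub_conjugate_sum_pow [Ring A] [StarRing A] (b : A) (k : ℕ) :
    ∑ j ∈ Finset.range k, star (b ^ j) * b ^ j
        - star b * (∑ j ∈ Finset.range k, star (b ^ j) * b ^ j) * b
      = 1 - star (b ^ k) * b ^ k := by
  have conjugate_term (j : ℕ) :
      star b * (star (b ^ j) * b ^ j) * b = star (b ^ (j + 1)) * b ^ (j + 1) := by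
    simp only [pow_succ, star_mul, mul_assoc]
  rw [Finset.mul_sum, Finset.sum_mul, ← Finset.sum_sub_distrib]
  simp_rw [conjugate_term]
  simpa using Finset.sum_range_sub' (fun j => star (b ^ j) * b ^ j) k

variable [CStarAlgebra A] [PartialOrder A] [StarOrderedRing A]

theorem isStrictlyPositive_one_sub_star_mul_self {b : A} (hb : ‖b‖ < 1) :
    IsStrictlyPositive (1 - star b * b) := by
  have norm_lt : ‖star b * b‖ < 1 := by
    rw [CStarRing.norm_star_mul_self]
    exact mul_lt_one_of_nonneg_of_lt_one_left (norm_nonneg _) hb hb.le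
  refine (isUnit_one_sub_of_norm_lt_one norm_lt).isStrictlyPositive (sub_nonneg.2 ?_)
  exact (CStarAlgebra.norm_le_one_iff_of_nonneg _).1 norm_lt.le

theorem exists_isStrictlyPositive_stein {b : A} (hb : ∀ z ∈ spectrum ℂ b, ‖z‖ < 1) :
    ∃ p : A, IsStrictlyPositive p ∧ IsStrictlyPositive (p - star b * p * b) := by
  obtain ⟨k, hk⟩ := exists_norm_pow_succ_lt_one_of_spectrum hb
  refine ⟨∑ j ∈ Finset.range (k + 1), star (b ^ j) * b ^ j, ?_, ?_⟩
  · rw [Finset.sum_range_succ', pow_zero, star_one, one_mul]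
    exact .nonneg_add (Finset.sum_nonneg fun j _ => star_mul_self_nonneg _) isStrictlyPositive_one
  · rw [sum_sub_conjugate_sum_pow]
    exact isStrictlyPositive_one_sub_star_mul_self hk

theorem exists_isStrictlyPositive_lyapunov {a : A} (ha : ∀ z ∈ spectrum ℂ a, z.re < 0) :
    ∃ p : A, IsStrictlyPositive p ∧ IsStrictlyPositive (-(star a * p + p * a)) := by
  have h_unit : IsUnit (1 - a) := by
    have : (1 : ℂ) ∉ spectrum ℂ a := fun h => by simpa using (ha 1 h).trans one_pos
    simpa [spectrum.notMem_iff] using this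
  obtain ⟨b, hb⟩ : ∃ b, b * (1 - a) = 1 + a :=
    ⟨(1 + a) * Ring.inverse (1 - a), by rw [mul_assoc, Ring.inverse_mul_cancel _ h_unit, mul_one]⟩
  obtain ⟨p, hp, h_stein⟩ := exists_isStrictlyPositive_stein fun μ hμ =>
    norm_lt_one_of_mem_spectrum_cayley ha h_unit hb hμ
  refine ⟨p, hp, ?_⟩
  have cayley_identity : star (1 - a) * (p - star b * p * b) * (1 - a) =
      (2 : ℝ) • -(star a * p + p * a) := by
    calc star (1 - a) * (p - star b * p * b) * (1 - a)
        = star (1 - a) * p * (1 - a) - star (b * (1 - a)) * p * (b * (1 - a)) := by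
          rw [star_mul]; noncomm_ring
      _ = (2 : ℝ) • -(star a * p + p * a) := by
          rw [hb, star_sub, star_add, star_one, two_smul]; noncomm_ring
  have two_smul_pos := h_unit.isStrictlyPositive_star_left_conjugate_iff.2 h_stein
  rw [cayley_identity] at two_smul_pos
  simpa [smul_smul] using two_smul_pos.smul (c := (2⁻¹ : ℝ)) (by positivity)

end CStarAlgebraLyapunov

section MatrixLyapunov

variable {m : Type*}

open scoped MatrixOrder Matrix.Norms.L2Operator ComplexOrder

theorem posDef_map_re [Finite m] {M : Matrix m m ℂ} (hM : M.PosDef) :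
    (M.map Complex.re).PosDef := by
  cases nonempty_fintype m
  refine .of_dotProduct_mulVec_pos (hM.isHermitian.map _ fun z => by simp) fun x hx => ?_
  have ofReal_x_ne : (fun i => (x i : ℂ)) ≠ 0 := fun h =>
    hx (funext fun i => Complex.ofReal_eq_zero.1 (congrFun h i))
  have re_pos := (Complex.pos_iff.1 (hM.dotProduct_mulVec_pos ofReal_x_ne)).1
  simpa [dotProduct, mulVec] using re_pos

theorem posSemidef_map_ofReal [Finite m] {M : Matrix m m ℝ} (hM : M.PosSemidef) :
    (M.map Complex.ofReal).PosSemidef := by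
  classical
  cases nonempty_fintype m
  obtain ⟨B, rfl⟩ := CStarAlgebra.nonneg_iff_eq_star_mul_self.1 hM.nonneg
  have : (star B * B).map Complex.ofReal = (B.map Complex.ofReal)ᴴ * B.map Complex.ofReal := by
    rw [star_eq_conjTranspose, ← conjTranspose_map Complex.ofReal fun x => by simp]
    exact Matrix.map_mul (f := Complex.ofRealHom)
  exact this ▸ posSemidef_conjTranspose_mul_self _

theorem posDef_map_ofReal [Finite m] {M : Matrix m m ℝ} (hM : M.PosDef) :
    (M.map Complex.ofReal).PosDef := by
  classical
  cases nonempty_fintype m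
  exact (posSemidef_map_ofReal hM.posSemidef).posDef_iff_isUnit.2
    (hM.isUnit.map Complex.ofRealHom.mapMatrix)

theorem posSemidef_fromBlocks_diagonal {ι κ α : Type*} [Finite ι] [Finite κ] [Ring α]
    [PartialOrder α] [StarRing α] [AddLeftMono α] {M : Matrix ι ι α} {N : Matrix κ κ α}
    (hM : M.PosSemidef) (hN : N.PosSemidef) : (fromBlocks M 0 0 N).PosSemidef := by
  cases nonempty_fintype ι
  cases nonempty_fintype κ
  refine .of_dotProduct_mulVec_nonneg
    (hM.isHermitian.fromBlocks conjTranspose_zero hN.isHermitian) fun x => ?_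
  have sum_nonneg := add_nonneg (hM.dotProduct_mulVec_nonneg (x ∘ Sum.inl))
    (hN.dotProduct_mulVec_nonneg (x ∘ Sum.inr))
  simpa [fromBlocks_mulVec, dotProduct] using sum_nonneg

theorem posDef_fromBlocks_diagonal {ι κ 𝕜 : Type*} [RCLike 𝕜] [Finite ι] [Finite κ]
    {M : Matrix ι ι 𝕜} {N : Matrix κ κ 𝕜} (hM : M.PosDef) (hN : N.PosDef) :
    (fromBlocks M 0 0 N).PosDef := by
  classical
  cases nonempty_fintype ι
  cases nonempty_fintype κ
  rw [(posSemidef_fromBlocks_diagonal hM.posSemidef hN.posSemidef).posDef_iff_det_ne_zero,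
    det_fromBlocks_zero₂₁]
  exact mul_ne_zero hM.det_pos.ne' hN.det_pos.ne'

theorem exists_posDef_lyapunov [Fintype m] [DecidableEq m] {S : Matrix m m ℝ}
    (hS : ∀ z ∈ spectrum ℂ (S.map Complex.ofReal), z.re < 0) :
    ∃ P : Matrix m m ℝ, P.PosDef ∧ (-(Sᴴ * P + P * S)).PosDef := by
  obtain ⟨P, hP, h_lyap⟩ := exists_isStrictlyPositive_lyapunov hS
  refine ⟨P.map Complex.re, posDef_map_re hP.posDef, ?_⟩
  convert posDef_map_re h_lyap.posDef using 1
  ext i j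
  simp [mul_apply]

end MatrixLyapunov

section Certificate

open scoped ComplexOrder

variable {m m' α : Type*} [Fintype m] [Fintype m']

theorem dotProduct_lyapunov_mulVec [NonUnitalSemiring α] [StarRing α] {E A : Matrix m m α}
    (R : Matrix m m α) {u v : m → α} (h : A *ᵥ v = E *ᵥ u) :
    star v ⬝ᵥ (Aᴴ * R + Rᴴ * A) *ᵥ v =
      star u ⬝ᵥ (Eᴴ * R) *ᵥ v + star (star u ⬝ᵥ (Eᴴ * R) *ᵥ v) := by
  have left_term : star v ⬝ᵥ (Aᴴ * R) *ᵥ v = star u ⬝ᵥ (Eᴴ * R) *ᵥ v := by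
    simp only [← mulVec_mulVec, dotProduct_mulVec, ← star_mulVec, h]
  have right_term : star v ⬝ᵥ (Rᴴ * A) *ᵥ v = star (star v ⬝ᵥ (Aᴴ * R) *ᵥ v) := by
    rw [← star_dotProduct, star_mulVec, conjTranspose_mul, conjTranspose_conjTranspose,
      dotProduct_mulVec]
  rw [add_mulVec, dotProduct_add, right_term, left_term]

variable [Ring α] [PartialOrder α] [StarRing α]

/-- `R` certifies the pair `(E, A)`: `EᴴR` is positive semidefinite and `AᴴR + RᴴA` is negative
definite, so that `x ↦ xᴴ(EᴴR)x` decreases along the nonzero solutions of `E ẋ = A x`. The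
symmetry `EᴴR = RᴴE` is part of `Matrix.PosSemidef`. -/
structure IsLyapunovCertificate (E A R : Matrix m m α) : Prop where
  posSemidef : (Eᴴ * R).PosSemidef
  posDef : (-(Aᴴ * R + Rᴴ * A)).PosDef

namespace IsLyapunovCertificate

variable {E A R : Matrix m m α}

theorem neg_dotProduct_add_star_pos (h : IsLyapunovCertificate E A R) {u v : m → α} (hv : v ≠ 0)
    (huv : A *ᵥ v = E *ᵥ u) :
    0 < -(star u ⬝ᵥ (Eᴴ * R) *ᵥ v + star (star u ⬝ᵥ (Eᴴ * R) *ᵥ v)) := by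
  rw [← dotProduct_lyapunov_mulVec R huv, ← dotProduct_neg, ← neg_mulVec]
  exact h.posDef.dotProduct_mulVec_pos hv

theorem eq_zero_of_mulVec_eq_zero (h : IsLyapunovCertificate E A R) {u v : m → α}
    (hv : E *ᵥ v = 0) (huv : A *ᵥ v = E *ᵥ u) : v = 0 := by
  by_contra hv_ne
  have energy_zero : (Eᴴ * R) *ᵥ v = 0 := by
    rw [← h.posSemidef.isHermitian.eq, conjTranspose_mul, conjTranspose_conjTranspose,
      ← mulVec_mulVec, hv, mulVec_zero]
  simpa [energy_zero] using h.neg_dotProduct_add_star_pos hv_ne huv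

theorem re_neg_of_mulVec_eq_smul {E A R : Matrix m m ℂ} (h : IsLyapunovCertificate E A R) {c : ℂ}
    {v : m → ℂ} (hv : v ≠ 0) (hc : A *ᵥ v = c • E *ᵥ v) : c.re < 0 := by
  have energy := Complex.nonneg_iff.1 (h.posSemidef.dotProduct_mulVec_nonneg v)
  have decay := (Complex.pos_iff.1 (h.neg_dotProduct_add_star_pos hv
    (hc.trans (mulVec_smul E c v).symm))).1
  have decay_eq : (-(star (c • v) ⬝ᵥ (Eᴴ * R) *ᵥ v + star (star (c • v) ⬝ᵥ (Eᴴ * R) *ᵥ v))).re =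
      -(2 * c.re * (star v ⬝ᵥ (Eᴴ * R) *ᵥ v).re) := by
    simp only [star_smul, RCLike.star_def, smul_dotProduct, smul_eq_mul, star_mul',
      RingHomCompTriple.comp_apply, RingHom.id_apply, neg_add_rev, Complex.add_re, Complex.neg_re,
      Complex.mul_re, Complex.conj_re, Complex.conj_im, ← energy.2, neg_zero, mul_zero, sub_zero]
    ring
  by_contra! hc_nonneg
  linarith [mul_nonneg hc_nonneg energy.1]

theorem map_ofReal {E A R : Matrix m m ℝ} (h : IsLyapunovCertificate E A R) :
    IsLyapunovCertificate (E.map Complex.ofReal) (A.map Complex.ofReal) (R.map Complex.ofReal) where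
  posSemidef := by
    have : (E.map Complex.ofReal)ᴴ * R.map Complex.ofReal = (Eᴴ * R).map Complex.ofReal := by
      ext i j; simp [mul_apply]
    exact this ▸ posSemidef_map_ofReal h.posSemidef
  posDef := by
    have : -((A.map Complex.ofReal)ᴴ * R.map Complex.ofReal +
        (R.map Complex.ofReal)ᴴ * A.map Complex.ofReal) =
        (-(Aᴴ * R + Rᴴ * A)).map Complex.ofReal := by
      ext i j; simp [mul_apply]
    exact this ▸ posDef_map_ofReal h.posDef

theorem submatrix_equiv (h : IsLyapunovCertificate E A R) (e : m' ≃ m) :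
    IsLyapunovCertificate (E.submatrix e e) (A.submatrix e e) (R.submatrix e e) where
  posSemidef := by
    rw [conjTranspose_submatrix, submatrix_mul_equiv]
    exact h.posSemidef.submatrix e
  posDef := by
    simp only [conjTranspose_submatrix, submatrix_mul_equiv]
    exact h.posDef.submatrix e.injective

variable [DecidableEq m]

theorem mul_mul_iff {P Q : Matrix m m α} (hQ : IsUnit Q) :
    IsLyapunovCertificate (P * E * Q) (P * A * Q) (R * Q) ↔
      IsLyapunovCertificate E A (Pᴴ * R) := by
  have conj_E : (P * E * Q)ᴴ * (R * Q) = star Q * (Eᴴ * (Pᴴ * R)) * Q := by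
    simp only [conjTranspose_mul, star_eq_conjTranspose, Matrix.mul_assoc]
  have conj_A : -((P * A * Q)ᴴ * (R * Q) + (R * Q)ᴴ * (P * A * Q)) =
      star Q * -(Aᴴ * (Pᴴ * R) + (Pᴴ * R)ᴴ * A) * Q := by
    simp only [conjTranspose_mul, conjTranspose_conjTranspose, star_eq_conjTranspose,
      Matrix.mul_assoc, Matrix.mul_neg, Matrix.neg_mul, Matrix.mul_add, Matrix.add_mul]
  constructor
  · rintro ⟨h_psd, h_pd⟩
    rw [conj_E, hQ.posSemidef_star_left_conjugate_iff] at h_psd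
    rw [conj_A, Matrix.IsUnit.posDef_star_left_conjugate_iff hQ] at h_pd
    exact ⟨h_psd, h_pd⟩
  · rintro ⟨h_psd, h_pd⟩
    refine ⟨?_, ?_⟩
    · rwa [conj_E, hQ.posSemidef_star_left_conjugate_iff]
    · rwa [conj_A, Matrix.IsUnit.posDef_star_left_conjugate_iff hQ]

end IsLyapunovCertificate

end Certificate

section Pencil

variable {m m' : Type*} [Fintype m] [DecidableEq m] [Fintype m']

theorem pencil_eq_det (E A : Matrix m m ℝ) :
    pencil E A = ((X : ℝ[X]) • E.map C - A.map C).det :=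
  rfl

theorem eval_pencil (E A : Matrix m m ℝ) (t : ℝ) : (pencil E A).eval t = (t • E - A).det := by
  rw [pencil_eq_det, ← coe_evalRingHom, RingHom.map_det]
  congr 1
  ext i j
  simp [mul_comm t]

theorem aeval_pencil (E A : Matrix m m ℝ) (z : ℂ) :
    aeval z (pencil E A) = (z • E.map Complex.ofReal - A.map Complex.ofReal).det := by
  rw [pencil_eq_det, AlgHom.map_det]
  congr 1
  ext i j
  simp [mul_comm z]

theorem pencil_mul_mul (P E A Q : Matrix m m ℝ) :
    pencil (P * E * Q) (P * A * Q) = C (P.det * Q.det) * pencil E A := by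
  have factor : (X : ℝ[X]) • (P * E * Q).map C - (P * A * Q).map C =
      P.map C * ((X : ℝ[X]) • E.map C - A.map C) * Q.map C := by
    simp only [Matrix.map_mul, Matrix.mul_sub, Matrix.sub_mul, Matrix.mul_smul, Matrix.smul_mul]
  have det_map_C (M : Matrix m m ℝ) : (M.map C).det = C M.det := (RingHom.map_det C M).symm
  rw [pencil_eq_det, factor, det_mul, det_mul, det_map_C, det_map_C, C_mul, pencil_eq_det]
  ring

theorem pencil_submatrix_equiv [DecidableEq m'] (E A : Matrix m m ℝ) (e : m' ≃ m) :
    pencil (E.submatrix e e) (A.submatrix e e) = pencil E A :=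
  det_submatrix_equiv_self e ((X : ℝ[X]) • E.map C - A.map C)

theorem asympStablePair_iff_aeval {E A : Matrix m m ℝ} :
    AsympStablePair E A ↔ ∀ z : ℂ, aeval z (pencil E A) = 0 → z.re < 0 := by
  simp only [AsympStablePair, aeval_pencil]

theorem regularPair_of_asympStablePair {E A : Matrix m m ℝ} (h : AsympStablePair E A) :
    RegularPair E A := fun pencil_eq_zero => by
  simpa using asympStablePair_iff_aeval.1 h 0 (by simp [pencil_eq_zero])

theorem asympStablePair_of_isLyapunovCertificate {E A R : Matrix m m ℝ}
    (h : IsLyapunovCertificate E A R) : AsympStablePair E A := by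
  intro z hz
  obtain ⟨v, hv, hv_ker⟩ := exists_mulVec_eq_zero_iff.2 hz
  rw [sub_mulVec, smul_mulVec, sub_eq_zero] at hv_ker
  exact h.map_ofReal.re_neg_of_mulVec_eq_smul hv hv_ker.symm

/-- Admissibility of the descriptor system `E ẋ = A x`. -/
def AdmissiblePair (E A : Matrix m m ℝ) : Prop :=
  RegularPair E A ∧ ImpulseFreePair E A ∧ AsympStablePair E A

/-- The pencils of `(E, A)` and `(E', A')` are strictly equivalent, i.e. they agree up to
invertible row and column operations, after identifying the index types along a bijection. -/
def StrictEquivPair (E A : Matrix m m ℝ) (E' A' : Matrix m' m' ℝ) : Prop :=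
  ∃ (P Q : Matrix m m ℝ) (e : m ≃ m'), IsUnit P ∧ IsUnit Q ∧
    P * E * Q = E'.submatrix e e ∧ P * A * Q = A'.submatrix e e

namespace StrictEquivPair

variable {E A : Matrix m m ℝ} {E' A' : Matrix m' m' ℝ}

theorem exists_pencil_eq [DecidableEq m'] (h : StrictEquivPair E A E' A') :
    ∃ c : ℝ, c ≠ 0 ∧ pencil E' A' = C c * pencil E A := by
  obtain ⟨P, Q, e, hP, hQ, hE, hA⟩ := h
  refine ⟨P.det * Q.det, mul_ne_zero ?_ ?_, ?_⟩
  · exact ((isUnit_iff_isUnit_det P).1 hP).ne_zero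
  · exact ((isUnit_iff_isUnit_det Q).1 hQ).ne_zero
  · rw [← pencil_mul_mul, hE, hA, pencil_submatrix_equiv]

theorem rank_eq (h : StrictEquivPair E A E' A') : E'.rank = E.rank := by
  obtain ⟨P, Q, e, hP, hQ, hE, -⟩ := h
  rw [← rank_submatrix E' e e, ← hE,
    rank_mul_eq_left_of_isUnit_det _ _ ((isUnit_iff_isUnit_det Q).1 hQ),
    rank_mul_eq_right_of_isUnit_det _ _ ((isUnit_iff_isUnit_det P).1 hP)]

theorem admissiblePair_iff [DecidableEq m'] (h : StrictEquivPair E A E' A') :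
    AdmissiblePair E A ↔ AdmissiblePair E' A' := by
  obtain ⟨c, hc, pencil_eq⟩ := h.exists_pencil_eq
  simp [AdmissiblePair, RegularPair, ImpulseFreePair, asympStablePair_iff_aeval, h.rank_eq,
    pencil_eq, natDegree_C_mul hc, hc]

theorem exists_isLyapunovCertificate_iff (h : StrictEquivPair E A E' A') :
    (∃ R, IsLyapunovCertificate E A R) ↔ ∃ R, IsLyapunovCertificate E' A' R := by
  obtain ⟨P, Q, e, hP, hQ, hE, hA⟩ := h
  have hP_det := (isUnit_iff_isUnit_det Pᴴ).1 ((isUnit_conjTranspose P).2 hP)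
  have hQ_det := (isUnit_iff_isUnit_det Q).1 hQ
  constructor
  · rintro ⟨R, hR⟩
    rw [← mul_nonsing_inv_cancel_left Pᴴ R hP_det] at hR
    have h_sub := (IsLyapunovCertificate.mul_mul_iff hQ).2 hR
    rw [hE, hA] at h_sub
    exact ⟨_, by simpa using h_sub.submatrix_equiv e.symm⟩
  · rintro ⟨R, hR⟩
    have h_sub := hR.submatrix_equiv e
    rw [← hE, ← hA, ← nonsing_inv_mul_cancel_right _ (R.submatrix e e) hQ_det] at h_sub
    exact ⟨_, (IsLyapunovCertificate.mul_mul_iff hQ).1 h_sub⟩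

end StrictEquivPair

end Pencil

section BlockForm

open Filter Topology

variable {ι κ : Type*} [DecidableEq ι]

variable (ι κ) in
/-- The rank normal form of a matrix of rank `|ι|` with corank `|κ|`. -/
abbrev rankNormalForm : Matrix (ι ⊕ κ) (ι ⊕ κ) ℝ :=
  fromBlocks 1 0 0 0

variable [Fintype ι] [Fintype κ]

theorem rank_rankNormalForm : (rankNormalForm ι κ).rank = Fintype.card ι := by
  classical
  have eq_diagonal : rankNormalForm ι κ = diagonal (Sum.elim 1 0) := by
    rw [rankNormalForm, ← diagonal_one, ← diagonal_zero, fromBlocks_diagonal]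
    rfl
  rw [eq_diagonal, rank_diagonal, Fintype.card_subtype, Finset.card_filter, Fintype.sum_sum_type]
  simp

variable [DecidableEq κ]

theorem exists_strictEquivPair_rankNormalForm {m : Type*} [Fintype m] [DecidableEq m]
    (E A : Matrix m m ℝ) :
    ∃ A' : Matrix (Fin E.rank ⊕ Fin (Fintype.card m - E.rank)) _ ℝ,
      StrictEquivPair E A (rankNormalForm _ _) A' := by
  obtain ⟨V, U, e, hV, hU, hE⟩ := exists_rank_normal_form E
  exact ⟨(V * A * U).submatrix e.symm e.symm, V, U, e, hV, hU, hE, by simp⟩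

variable {a : Matrix ι ι ℝ} {b : Matrix ι κ ℝ} {c : Matrix κ ι ℝ} {d : Matrix κ κ ℝ}

theorem tendsto_eval_pencil_div_pow_card :
    Tendsto (fun t => (pencil (rankNormalForm ι κ) (fromBlocks a b c d)).eval t /
      t ^ Fintype.card ι) atTop (𝓝 (-d).det) := by
  let rescaled (s : ℝ) : ℝ := (fromBlocks (1 - s • a) (-(s • b)) (-c) (-d)).det
  have rescaled_zero : rescaled 0 = (-d).det := by
    simp [rescaled, det_fromBlocks_zero₁₂]
  have rescaled_continuous : Continuous rescaled := by
    refine (Continuous.matrix_fromBlocks ?_ ?_ ?_ ?_).matrix_det <;> fun_prop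
  have rescaled_eq {t : ℝ} (ht : 0 < t) :
      rescaled t⁻¹ = (pencil (rankNormalForm ι κ) (fromBlocks a b c d)).eval t /
        t ^ Fintype.card ι := by
    have factor : t • rankNormalForm ι κ - fromBlocks a b c d =
        fromBlocks (t • 1) 0 0 1 *
          fromBlocks (1 - t⁻¹ • a) (-(t⁻¹ • b)) (-c) (-d) := by
      simp [fromBlocks_multiply, fromBlocks_smul, sub_eq_add_neg, fromBlocks_neg, fromBlocks_add,
        smul_smul, ht.ne']
    rw [eval_pencil, factor, det_mul, det_fromBlocks_zero₂₁, det_smul, det_one, det_one, mul_one,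
      mul_one, mul_div_cancel_left₀ _ (by positivity)]
  rw [← rescaled_zero]
  refine ((rescaled_continuous.tendsto 0).comp tendsto_inv_atTop_zero).congr' ?_
  filter_upwards [eventually_gt_atTop 0] with t ht using rescaled_eq ht

theorem isUnit_of_impulseFreePair
    (h : ImpulseFreePair (rankNormalForm ι κ) (fromBlocks a b c d)) : IsUnit d := by
  obtain ⟨pencil_ne_zero, degree_eq⟩ := h
  set p := pencil (rankNormalForm ι κ) (fromBlocks a b c d)
  have tendsto_leadingCoeff := div_tendsto_atTop_leadingCoeff_div_of_degree_eq p
    (X ^ Fintype.card ι) (by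
      rw [degree_X_pow, degree_eq_natDegree pencil_ne_zero, degree_eq, rank_rankNormalForm])
  simp only [eval_pow, eval_X, leadingCoeff_X_pow, div_one] at tendsto_leadingCoeff
  have det_eq := tendsto_nhds_unique tendsto_eval_pencil_div_pow_card tendsto_leadingCoeff
  rw [← IsUnit.neg_iff, isUnit_iff_isUnit_det, isUnit_iff_ne_zero, det_eq]
  exact leadingCoeff_ne_zero.2 pencil_ne_zero

theorem isUnit_of_isLyapunovCertificate {R : Matrix (ι ⊕ κ) (ι ⊕ κ) ℝ}
    (h : IsLyapunovCertificate (rankNormalForm ι κ) (fromBlocks a b c d) R) : IsUnit d := by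
  rw [isUnit_iff_isUnit_det, isUnit_iff_ne_zero, Ne, ← exists_mulVec_eq_zero_iff]
  rintro ⟨w, w_ne_zero, hw⟩
  have extend_eq_zero : Sum.elim (0 : ι → ℝ) w = 0 :=
    h.eq_zero_of_mulVec_eq_zero (u := Sum.elim (b *ᵥ w) (0 : κ → ℝ))
      (by simp [fromBlocks_mulVec]) (by simp [fromBlocks_mulVec, hw])
  exact w_ne_zero (funext fun k => congrFun extend_eq_zero (.inr k))

variable (κ) in
/-- The state matrix of a pair in Weierstrass form of index one with finite part `S`, to be paired
with `rankNormalForm ι κ`. -/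
abbrev weierstrassForm (S : Matrix ι ι ℝ) : Matrix (ι ⊕ κ) (ι ⊕ κ) ℝ :=
  fromBlocks S 0 0 1

theorem strictEquivPair_weierstrassForm (a : Matrix ι ι ℝ) (b : Matrix ι κ ℝ) (c : Matrix κ ι ℝ)
    (hd : IsUnit d) :
    StrictEquivPair (rankNormalForm ι κ) (fromBlocks a b c d)
      (rankNormalForm ι κ) (weierstrassForm κ (a - b * d⁻¹ * c)) := by
  have hd_det := (isUnit_iff_isUnit_det d).1 hd
  refine ⟨fromBlocks 1 (-(b * d⁻¹)) 0 d⁻¹, fromBlocks 1 0 (-(d⁻¹ * c)) 1, .refl _, ?_, ?_, ?_, ?_⟩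
  · simpa [isUnit_iff_isUnit_det, det_nonsing_inv, isUnit_iff_ne_zero] using hd_det
  · simp [isUnit_iff_isUnit_det]
  · simp [fromBlocks_multiply]
  · simp [fromBlocks_multiply, nonsing_inv_mul _ hd_det, Matrix.mul_assoc, sub_eq_add_neg]

theorem pencil_weierstrassForm (S : Matrix ι ι ℝ) :
    pencil (rankNormalForm ι κ) (weierstrassForm κ S) =
      C ((-1) ^ Fintype.card κ) * S.charpoly := by
  have charmatrix_block : (X : ℝ[X]) • (rankNormalForm ι κ).map C -
      (weierstrassForm κ S).map C = fromBlocks (charmatrix S) 0 0 (-1) := by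
    ext i j
    rcases i with i | i <;> rcases j with j | j <;>
      simp [charmatrix_apply, Matrix.one_apply, Matrix.diagonal_apply]
  rw [pencil_eq_det, charmatrix_block, det_fromBlocks_zero₂₁, det_neg, det_one, Matrix.charpoly]
  simp [mul_comm]

theorem impulseFreePair_weierstrassForm (S : Matrix ι ι ℝ) :
    ImpulseFreePair (rankNormalForm ι κ) (weierstrassForm κ S) := by
  have sign_ne_zero : ((-1) ^ Fintype.card κ : ℝ) ≠ 0 := by simp
  rw [ImpulseFreePair, pencil_weierstrassForm, natDegree_C_mul sign_ne_zero,
    charpoly_natDegree_eq_dim, rank_rankNormalForm]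
  exact ⟨mul_ne_zero (C_ne_zero.2 sign_ne_zero) S.charpoly_monic.ne_zero, rfl⟩

theorem asympStablePair_weierstrassForm_iff {S : Matrix ι ι ℝ} :
    AsympStablePair (rankNormalForm ι κ) (weierstrassForm κ S) ↔
      ∀ z ∈ spectrum ℂ (S.map Complex.ofReal), z.re < 0 := by
  have isRoot_iff (z : ℂ) : z ∈ spectrum ℂ (S.map Complex.ofReal) ↔ aeval z S.charpoly = 0 := by
    rw [mem_spectrum_iff_isRoot_charpoly, IsRoot.def, ← eval_map_algebraMap]
    exact iff_of_eq (by rw [← charpoly_map]; rfl)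
  simp [asympStablePair_iff_aeval, pencil_weierstrassForm, isRoot_iff]

theorem isLyapunovCertificate_weierstrassForm {S P : Matrix ι ι ℝ} (hP : P.PosDef)
    (h_lyap : (-(Sᴴ * P + P * S)).PosDef) :
    IsLyapunovCertificate (rankNormalForm ι κ) (weierstrassForm κ S) (fromBlocks P 0 0 (-1)) where
  posSemidef := by
    rw [fromBlocks_conjTranspose, fromBlocks_multiply]
    simpa using
      posSemidef_fromBlocks_diagonal hP.posSemidef (.zero : (0 : Matrix κ κ ℝ).PosSemidef)
  posDef := by
    have two_posDef : (1 + 1 : Matrix κ κ ℝ).PosDef := PosDef.one.add PosDef.one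
    rw [fromBlocks_conjTranspose, fromBlocks_conjTranspose, hP.isHermitian.eq,
      fromBlocks_multiply, fromBlocks_multiply, fromBlocks_add, fromBlocks_neg]
    simpa using posDef_fromBlocks_diagonal h_lyap two_posDef

theorem admissiblePair_weierstrassForm_iff {S : Matrix ι ι ℝ} :
    AdmissiblePair (rankNormalForm ι κ) (weierstrassForm κ S) ↔
      ∃ R, IsLyapunovCertificate (rankNormalForm ι κ) (weierstrassForm κ S) R := by
  constructor
  · rintro ⟨-, -, h_stable⟩
    obtain ⟨P, hP, h_lyap⟩ :=
      exists_posDef_lyapunov (asympStablePair_weierstrassForm_iff.1 h_stable)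
    exact ⟨_, isLyapunovCertificate_weierstrassForm hP h_lyap⟩
  · rintro ⟨R, hR⟩
    have h_stable := asympStablePair_of_isLyapunovCertificate hR
    exact ⟨regularPair_of_asympStablePair h_stable, impulseFreePair_weierstrassForm S, h_stable⟩

theorem admissiblePair_fromBlocks_iff :
    AdmissiblePair (rankNormalForm ι κ) (fromBlocks a b c d) ↔
      ∃ R, IsLyapunovCertificate (rankNormalForm ι κ) (fromBlocks a b c d) R := by
  suffices IsUnit d → (AdmissiblePair (rankNormalForm ι κ) (fromBlocks a b c d) ↔
      ∃ R, IsLyapunovCertificate (rankNormalForm ι κ) (fromBlocks a b c d) R) from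
    ⟨fun h => (this (isUnit_of_impulseFreePair h.2.1)).1 h,
      fun ⟨R, hR⟩ => (this (isUnit_of_isLyapunovCertificate hR)).2 ⟨R, hR⟩⟩
  intro hd
  have h_equiv := strictEquivPair_weierstrassForm a b c hd
  rw [h_equiv.admissiblePair_iff, admissiblePair_weierstrassForm_iff,
    h_equiv.exists_isLyapunovCertificate_iff]

end BlockForm

theorem isLyapunovCertificate_iff_transpose {m : Type*} [Fintype m] {E A R : Matrix m m ℝ} :
    IsLyapunovCertificate E A R ↔
      Eᵀ * R = Rᵀ * E ∧ (Eᵀ * R).PosSemidef ∧ (-(Aᵀ * R + Rᵀ * A)).PosDef := by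
  simp only [← conjTranspose_eq_transpose_of_trivial]
  refine ⟨fun h => ⟨?_, h.posSemidef, h.posDef⟩, fun h => ⟨h.2.1, h.2.2⟩⟩
  simpa only [conjTranspose_mul, conjTranspose_conjTranspose] using h.posSemidef.isHermitian.eq.symm

theorem stmt1_general {m : Type*} [Fintype m] [DecidableEq m] (E A : Matrix m m ℝ) :
    (RegularPair E A ∧ ImpulseFreePair E A ∧ AsympStablePair E A) ↔
      ∃ R : Matrix m m ℝ,
        Eᵀ * R = Rᵀ * E ∧ (Eᵀ * R).PosSemidef ∧ (-(Aᵀ * R + Rᵀ * A)).PosDef := by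
  simp only [← isLyapunovCertificate_iff_transpose]
  change AdmissiblePair E A ↔ _
  obtain ⟨A', h_equiv⟩ := exists_strictEquivPair_rankNormalForm E A
  rw [h_equiv.admissiblePair_iff, h_equiv.exists_isLyapunovCertificate_iff,
    ← fromBlocks_toBlocks A', admissiblePair_fromBlocks_iff]

/-- Lemma 2 of the paper: `(E, A)` is regular, impulse-free and asymptotically stable
iff there is `R` with `EᵀR = RᵀE ⪰ 0` and `AᵀR + RᵀA ≺ 0`. -/
theorem stmt1 (n : ℕ) (E A : Matrix (Fin n) (Fin n) ℝ) :
    (RegularPair E A ∧ ImpulseFreePair E A ∧ AsympStablePair E A) ↔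
      ∃ R : Matrix (Fin n) (Fin n) ℝ,
        Eᵀ * R = Rᵀ * E ∧ (Eᵀ * R).PosSemidef ∧ (-(Aᵀ * R + Rᵀ * A)).PosDef :=
  stmt1_general E A
end

section
/- Let E₁, A₁ be n₁×n₁ real matrices, E₂, A₂ be n₂×n₂ real matrices, and A₁₂ an n₁×n₂ real matrix. Set E = [[E₁, 0],[0, E₂]] (block diagonal) and A = [[A₁, A₁₂],[0, A₂]] (block upper triangular). Then the pair (E, A) is regular and impulse-free if and only if both pairs (E₁, A₁) and (E₂, A₂) are regular and impulse-free. -/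
open Polynomial Matrix

/-- The pair `(E, A)` is regular and impulse-free. -/
def RegularImpulseFreePair {n : Type*} [Fintype n] [DecidableEq n]
    (E A : Matrix n n ℝ) : Prop :=
  pencil E A ≠ 0 ∧ (pencil E A).natDegree = E.rank

/-!
The pencil `X • E - A` is block upper triangular, so its determinant is the product of the
determinants of the two diagonal pencils; hence degrees add, and so do the ranks of the diagonal
blocks of `E`. Every pair satisfies `deg det (X • E - A) ≤ rank E`: after bringing `E` into rank
normal form by constant invertible matrices, only `rank E` rows of the pencil contain `X`. So the
sum of the two degrees equals the sum of the two ranks exactly when each degree equals its rank.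
-/

section CommRing

variable {R l m n o p q : Type*} [CommRing R]

/-- The matrix pencil `X • E - A` of a pair of matrices over a commutative ring, as a matrix of
polynomials. The matrices may be rectangular, so that the blocks of a pencil are again pencils. -/
noncomputable def matrixPencil (E A : Matrix m n R) : Matrix m n R[X] :=
  (X : R[X]) • E.map C - A.map C

theorem matrixPencil_mul_mul [Fintype m] [Fintype n] (V : Matrix l m R) (E A : Matrix m n R)
    (U : Matrix n o R) :
    matrixPencil (V * E * U) (V * A * U) = V.map C * matrixPencil E A * U.map C := by
  simp only [matrixPencil, Matrix.map_mul, Matrix.mul_sub, Matrix.sub_mul, Matrix.mul_smul,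
    Matrix.smul_mul]

theorem matrixPencil_fromBlocks
    (E₁₁ A₁₁ : Matrix m p R) (E₁₂ A₁₂ : Matrix m q R)
    (E₂₁ A₂₁ : Matrix n p R) (E₂₂ A₂₂ : Matrix n q R) :
    matrixPencil (fromBlocks E₁₁ E₁₂ E₂₁ E₂₂) (fromBlocks A₁₁ A₁₂ A₂₁ A₂₂) =
      fromBlocks (matrixPencil E₁₁ A₁₁) (matrixPencil E₁₂ A₁₂)
        (matrixPencil E₂₁ A₂₁) (matrixPencil E₂₂ A₂₂) := by
  simp only [matrixPencil, fromBlocks_map, fromBlocks_smul, sub_eq_add_neg, fromBlocks_neg,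
    fromBlocks_add]

theorem matrixPencil_zero_zero : matrixPencil (0 : Matrix m n R) 0 = 0 := by
  simp [matrixPencil]

theorem natDegree_matrixPencil_apply_le_one (E A : Matrix m n R) (i : m) (j : n) :
    (matrixPencil E A i j).natDegree ≤ 1 := by
  simp only [matrixPencil, Matrix.sub_apply, Matrix.smul_apply, map_apply, smul_eq_mul]
  compute_degree

theorem natDegree_matrixPencil_apply_of_eq_zero {E : Matrix m n R} {i : m} {j : n}
    (hE : E i j = 0) (A : Matrix m n R) : (matrixPencil E A i j).natDegree = 0 := by
  simp [matrixPencil, hE]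

variable [Fintype m] [DecidableEq m] [Fintype n] [DecidableEq n]

theorem natDegree_det_le_sum {M : Matrix n n R[X]} {d : n → ℕ}
    (hd : ∀ i j, (M i j).natDegree ≤ d i) : M.det.natDegree ≤ ∑ i, d i := by
  rw [det_apply]
  refine natDegree_sum_le_of_forall_le _ _ fun σ _ => ?_
  calc (Equiv.Perm.sign σ • ∏ i, M (σ i) i).natDegree
      ≤ (∏ i, M (σ i) i).natDegree := natDegree_smul_le _ _
    _ ≤ ∑ i, (M (σ i) i).natDegree := natDegree_prod_le _ _
    _ ≤ ∑ i, d (σ i) := Finset.sum_le_sum fun i _ => hd (σ i) i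
    _ = ∑ i, d i := Equiv.sum_comp σ d

theorem det_matrixPencil_mul_mul (V E A U : Matrix n n R) :
    (matrixPencil (V * E * U) (V * A * U)).det =
      C V.det * (matrixPencil E A).det * C U.det := by
  rw [matrixPencil_mul_mul, det_mul, det_mul, RingHom.map_det, RingHom.map_det,
    RingHom.mapMatrix_apply, RingHom.mapMatrix_apply]

theorem det_matrixPencil_fromBlocks_zero₂₁
    (E₁ A₁ : Matrix m m R) (E₁₂ A₁₂ : Matrix m n R) (E₂ A₂ : Matrix n n R) :
    (matrixPencil (fromBlocks E₁ E₁₂ 0 E₂) (fromBlocks A₁ A₁₂ 0 A₂)).det =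
      (matrixPencil E₁ A₁).det * (matrixPencil E₂ A₂).det := by
  rw [matrixPencil_fromBlocks, matrixPencil_zero_zero, det_fromBlocks_zero₂₁]

end CommRing

theorem finrank_submodule_prod {K V W : Type*} [DivisionRing K] [AddCommGroup V] [Module K V]
    [AddCommGroup W] [Module K W] (p : Submodule K V) (q : Submodule K W)
    [FiniteDimensional K p] [FiniteDimensional K q] :
    Module.finrank K (p.prod q) = Module.finrank K p + Module.finrank K q := by
  have subtype_prodMap_injective : Function.Injective (p.subtype.prodMap q.subtype) :=
    p.subtype_injective.prodMap q.subtype_injective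
  calc Module.finrank K (p.prod q)
      = Module.finrank K (p.subtype.prodMap q.subtype).range := by
        rw [LinearMap.range_prodMap, Submodule.range_subtype, Submodule.range_subtype]
    _ = Module.finrank K (p × q) := LinearMap.finrank_range_of_inj subtype_prodMap_injective
    _ = Module.finrank K p + Module.finrank K q := Module.finrank_prod

section Field

variable {K m n p q : Type*} [Field K]

theorem rank_fromBlocks_zero_zero [Fintype p] [Fintype q] (A : Matrix m p K) (D : Matrix n q K) :
    (fromBlocks A 0 0 D).rank = A.rank + D.rank := by
  let domainEquiv := LinearEquiv.sumArrowLequivProdArrow p q K K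
  let codomainEquiv := LinearEquiv.sumArrowLequivProdArrow m n K K
  have mulVecLin_eq : (fromBlocks A 0 0 D).mulVecLin =
      codomainEquiv.symm ∘ₗ A.mulVecLin.prodMap D.mulVecLin ∘ₗ domainEquiv := by
    refine LinearMap.ext fun v => ?_
    rw [mulVecLin_apply, fromBlocks_mulVec, Matrix.zero_mulVec, Matrix.zero_mulVec, add_zero,
      zero_add]
    rfl
  simp only [Matrix.rank]
  rw [mulVecLin_eq, LinearMap.range_comp, LinearEquiv.finrank_map_eq,
    LinearMap.range_comp_of_range_eq_top _ domainEquiv.range, LinearMap.range_prodMap,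
    finrank_submodule_prod]

variable [Fintype m] [DecidableEq m] [Fintype n] [DecidableEq n]

theorem natDegree_det_matrixPencil_le_rank (E A : Matrix n n K) :
    (matrixPencil E A).det.natDegree ≤ E.rank := by
  obtain ⟨V, U, e, hV, hU, hVEU⟩ := exists_rank_normal_form E
  rw [isUnit_iff_isUnit_det] at hV hU
  let rowDegree : Fin E.rank ⊕ Fin (Fintype.card n - E.rank) → ℕ := Sum.elim 1 0
  have natDegree_entry_le (i j : n) :
      (matrixPencil (V * E * U) (V * A * U) i j).natDegree ≤ rowDegree (e i) := by
    rcases hi : e i with r | s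
    · exact natDegree_matrixPencil_apply_le_one _ _ i j
    · refine (natDegree_matrixPencil_apply_of_eq_zero ?_ _).le
      rw [hVEU, submatrix_apply, hi]
      rcases e j with r | s <;> rfl
  calc (matrixPencil E A).det.natDegree
      = (matrixPencil (V * E * U) (V * A * U)).det.natDegree := by
        rw [det_matrixPencil_mul_mul, natDegree_mul_C hU.ne_zero, natDegree_C_mul hV.ne_zero]
    _ ≤ ∑ i, rowDegree (e i) := natDegree_det_le_sum natDegree_entry_le
    _ = ∑ k, rowDegree k := Equiv.sum_comp e rowDegree
    _ = E.rank := by simp [rowDegree]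

/-- The pair `(E, A)` over a field is regular and impulse-free. Regularity is a separate conjunct
because `natDegree 0 = 0` would let `(0, 0)` pass the degree condition in every size. -/
def IsRegularImpulseFree (E A : Matrix n n K) : Prop :=
  (matrixPencil E A).det ≠ 0 ∧ (matrixPencil E A).det.natDegree = E.rank

theorem stmt16_general (E₁ A₁ : Matrix m m K) (E₂ A₂ : Matrix n n K) (A₁₂ : Matrix m n K) :
    IsRegularImpulseFree (fromBlocks E₁ 0 0 E₂) (fromBlocks A₁ A₁₂ 0 A₂) ↔
      IsRegularImpulseFree E₁ A₁ ∧ IsRegularImpulseFree E₂ A₂ := by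
  have degree_le₁ := natDegree_det_matrixPencil_le_rank E₁ A₁
  have degree_le₂ := natDegree_det_matrixPencil_le_rank E₂ A₂
  simp only [IsRegularImpulseFree, det_matrixPencil_fromBlocks_zero₂₁, rank_fromBlocks_zero_zero,
    mul_ne_zero_iff, and_and_and_comm (b := _ = _)]
  refine and_congr_right fun ⟨regular₁, regular₂⟩ => ?_
  rw [natDegree_mul regular₁ regular₂]
  exact add_eq_add_iff_eq_and_eq degree_le₁ degree_le₂

end Field

theorem regularImpulseFreePair_iff {n : Type*} [Fintype n] [DecidableEq n] (E A : Matrix n n ℝ) :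
    RegularImpulseFreePair E A ↔ IsRegularImpulseFree E A :=
  Iff.rfl

/-- For `E = [[E₁, 0],[0, E₂]]` block diagonal and `A = [[A₁, A₁₂],[0, A₂]]` block
upper triangular, `(E, A)` is regular and impulse-free iff both `(E₁, A₁)` and
`(E₂, A₂)` are regular and impulse-free. -/
theorem stmt16 (n₁ n₂ : ℕ)
    (E₁ A₁ : Matrix (Fin n₁) (Fin n₁) ℝ) (E₂ A₂ : Matrix (Fin n₂) (Fin n₂) ℝ)
    (A₁₂ : Matrix (Fin n₁) (Fin n₂) ℝ) :
    RegularImpulseFreePair (Matrix.fromBlocks E₁ 0 0 E₂) (Matrix.fromBlocks A₁ A₁₂ 0 A₂) ↔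
      RegularImpulseFreePair E₁ A₁ ∧ RegularImpulseFreePair E₂ A₂ := by
  simp only [regularImpulseFreePair_iff]
  exact stmt16_general E₁ A₁ E₂ A₂ A₁₂
end
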